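/- Let 𝓗 be a Hopf algebra with antipode S and a character δ with S̃_δ² = id, and let 𝒫 be a left 𝓗-module algebra. Then the double crossed product algebra H = 𝒫 ⋊ 𝓗 ⋉ 𝒫^op, with multiplication (P₁⋊h₁⋉Q₁)(P₂⋊h₂⋉Q₂) = P₁h₁⁽¹⁾(P₂) ⋊ h₁⁽²⁾h₂ ⋉ h₁⁽³⁾(Q₂)Q₁, source α(P) = P⋊1⋉1, target β(Q) = 1⋊1⋉Q, coproduct Δ(P⋊h⋉Q) = (P⋊h⁽¹⁾⋉1) ⊗_𝒫 (1⋊h⁽²⁾⋉Q), counit ε(P⋊h⋉Q) = Pε(h)Q, and T(P⋊h⋉Q) = S(h⁽³⁾)(Q) ⋊ S(h⁽²⁾) ⋉ S̃_δ(h⁽¹⁾)(P), is a para-Hopf algebroid over 𝒫. -/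

import Mathlib

open TensorProduct

noncomputable section

/-- The data of a (pre-)bialgebroid: total algebra `H`, base algebra `R`,
source map `α` (algebra map), target map `β` (anti-algebra map), a linear lift
`Δ : H → H ⊗[k] H` of the coproduct, and the counit `ε`. -/
structure PreBialgebroid (k H R : Type) [Field k] [Ring H] [Algebra k H]
    [Ring R] [Algebra k R] where
  α : R →ₐ[k] H
  β : R →ₗ[k] H
  β_one : β 1 = 1
  β_mul : ∀ a b : R, β (a * b) = β b * β a
  αβ_comm : ∀ a b : R, α a * β b = β b * α a
  Δ : H →ₗ[k] H ⊗[k] H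
  ε : H →ₗ[k] R

namespace PreBialgebroid

variable {k H R : Type} [Field k] [Ring H] [Algebra k H] [Ring R] [Algebra k R]
variable (D : PreBialgebroid k H R)

/-- The submodule of `H ⊗[k] H` by which one divides to obtain `H ⊗_R H`. -/
def rel2 : Submodule k (H ⊗[k] H) :=
  Submodule.span k {z | ∃ (r : R) (x y : H), z = (D.β r * x) ⊗ₜ[k] y - x ⊗ₜ[k] (D.α r * y)}

/-- The projection `H ⊗[k] H → H ⊗_R H`. -/
def π2 : H ⊗[k] H →ₗ[k] (H ⊗[k] H) ⧸ D.rel2 := D.rel2.mkQ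

/-- Relations for the triple tensor product `H ⊗_R H ⊗_R H` (right associated). -/
def rel3 : Submodule k (H ⊗[k] (H ⊗[k] H)) :=
  Submodule.span k {z |
    (∃ (r : R) (x y w : H), z = (D.β r * x) ⊗ₜ[k] (y ⊗ₜ[k] w) - x ⊗ₜ[k] ((D.α r * y) ⊗ₜ[k] w)) ∨
    (∃ (r : R) (x y w : H), z = x ⊗ₜ[k] ((D.β r * y) ⊗ₜ[k] w) - x ⊗ₜ[k] (y ⊗ₜ[k] (D.α r * w)))}

def π3 : H ⊗[k] (H ⊗[k] H) →ₗ[k] (H ⊗[k] (H ⊗[k] H)) ⧸ D.rel3 := D.rel3.mkQ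

/-- For a linear map `f : H → H`, the map `x ⊗ y ↦ f x * y`. -/
def mulL (f : H →ₗ[k] H) : H ⊗[k] H →ₗ[k] H :=
  TensorProduct.lift
    (LinearMap.mk₂ k (fun x y => f x * y)
      (by intro x x' y; simp [map_add, add_mul])
      (by intro c x y; simp [map_smul, smul_mul_assoc])
      (by intro x y y'; simp [mul_add])
      (by intro c x y; simp [mul_smul_comm]))

/-- For a linear map `f : H → H`, the map `x ⊗ y ↦ f y * x`. -/
def mulR (f : H →ₗ[k] H) : H ⊗[k] H →ₗ[k] H :=
  TensorProduct.lift
    (LinearMap.mk₂ k (fun x y => f y * x)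
      (by intro x x' y; simp [mul_add])
      (by intro c x y; simp [mul_smul_comm])
      (by intro x y y'; simp [map_add, add_mul])
      (by intro c x y; simp [map_smul, smul_mul_assoc]))

/-- The (lift of the) Connes–Moscovici cyclic operator in degree 2:
`x ⊗ y ↦ Δ(T x) · (y ⊗ 1)`. -/
def tau2 (T : H →ₗ[k] H) : H ⊗[k] H →ₗ[k] H ⊗[k] H :=
  TensorProduct.lift
    (LinearMap.mk₂ k (fun x y => D.Δ (T x) * (y ⊗ₜ[k] (1 : H)))
      (by intro x x' y; simp [map_add, add_mul])
      (by intro c x y; simp [map_smul, smul_mul_assoc])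
      (by intro x y y'; simp [add_tmul, mul_add])
      (by intro c x y; simp [← TensorProduct.smul_tmul', mul_smul_comm]))

/-- The bialgebroid axioms, stated for the chosen linear lift `Δ` of the coproduct
modulo the relations defining `H ⊗_R H`. -/
structure IsBialgebroid : Prop where
  Δ_one : D.π2 (D.Δ 1) = D.π2 ((1 : H) ⊗ₜ[k] (1 : H))
  coassoc : ∀ h : H,
    D.π3 ((TensorProduct.assoc k H H H) ((D.Δ.rTensor H) (D.Δ h))) =
      D.π3 ((D.Δ.lTensor H) (D.Δ h))
  Δ_cp3 : ∀ (h : H) (r : R),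
    D.π2 (D.Δ h * (D.β r ⊗ₜ[k] (1 : H) - (1 : H) ⊗ₜ[k] D.α r)) = 0
  Δ_mul : ∀ a b : H, D.π2 (D.Δ (a * b)) = D.π2 (D.Δ a * D.Δ b)
  Δ_left : ∀ (r : R) (h : H),
    D.π2 (D.Δ (D.α r * h)) = D.π2 ((D.α r ⊗ₜ[k] (1 : H)) * D.Δ h)
  Δ_right : ∀ (r : R) (h : H),
    D.π2 (D.Δ (D.β r * h)) = D.π2 (((1 : H) ⊗ₜ[k] D.β r) * D.Δ h)
  ε_one : D.ε 1 = 1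
  ε_left : ∀ (r : R) (h : H), D.ε (D.α r * h) = r * D.ε h
  ε_right : ∀ (r : R) (h : H), D.ε (D.β r * h) = D.ε h * r
  counit_l : ∀ h : H, mulL (D.α.toLinearMap ∘ₗ D.ε) (D.Δ h) = h
  counit_r : ∀ h : H, mulR (D.β ∘ₗ D.ε) (D.Δ h) = h

/-- The para-Hopf algebroid axioms for a para-antipode `T`. -/
structure IsParaHopf (T : H →ₗ[k] H) : Prop where
  bialgebroid : D.IsBialgebroid
  T_one : T 1 = 1
  T_antimul : ∀ a b : H, T (a * b) = T b * T a
  PH1 : ∀ r : R, T (D.β r) = D.α r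
  PH2 : ∀ h : H, mulL T (D.Δ h) = D.β (D.ε (T h))
  T_invol : ∀ h : H, T (T h) = h
  PH3 : ∀ h : H, D.π2 (tau2 D T (D.Δ h)) = D.π2 ((1 : H) ⊗ₜ[k] T h)

end PreBialgebroid

open Coalgebra in
/-- The convolution `δ * S` for a character `δ`. -/
def twistedAntipode {k 𝓗 : Type} [Field k] [Ring 𝓗] [HopfAlgebra k 𝓗]
    (δ : 𝓗 →ₐ[k] k) : 𝓗 →ₗ[k] 𝓗 :=
  (TensorProduct.lift
    (LinearMap.mk₂ k (fun x y => δ x • HopfAlgebra.antipode (R := k) y)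
      (by intro x x' y; simp [map_add, add_smul])
      (by intro c x y; simp [mul_smul])
      (by intro x y y'; simp [map_add, smul_add])
      (by intro c x y; simp only [map_smul]; rw [smul_comm]))) ∘ₗ comul

open Coalgebra

section DoubleCrossedProduct

variable {k 𝓗 PAlg HH : Type} [Field k] [Ring 𝓗] [HopfAlgebra k 𝓗]
  [Ring PAlg] [Algebra k PAlg] [Ring HH] [Algebra k HH]

/-- The iterated coproduct `Δ² : 𝓗 → 𝓗 ⊗ (𝓗 ⊗ 𝓗)`. -/
def comul2 : 𝓗 →ₗ[k] 𝓗 ⊗[k] (𝓗 ⊗[k] 𝓗) :=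
  (LinearMap.lTensor 𝓗 (comul (R := k))) ∘ₗ comul

/-- `a ⊗ b ⊗ c ↦ (P₁ · a(P₂)) ⊗ (b h₂) ⊗ (c(Q₂) Q₁)`, expressing the double crossed
product multiplication. -/
def dcpMul (ρ : 𝓗 →ₗ[k] PAlg →ₗ[k] PAlg) (P₁ P₂ Q₁ Q₂ : PAlg) (h₂ : 𝓗) :
    𝓗 ⊗[k] (𝓗 ⊗[k] 𝓗) →ₗ[k] PAlg ⊗[k] (𝓗 ⊗[k] PAlg) :=
  TensorProduct.map (LinearMap.mulLeft k P₁ ∘ₗ ρ.flip P₂)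
    (TensorProduct.map (LinearMap.mulRight k h₂) (LinearMap.mulRight k Q₁ ∘ₗ ρ.flip Q₂))

/-- The cyclic permutation `u ⊗ (v ⊗ w) ↦ w ⊗ (v ⊗ u)`. -/
def cyc3 (M N P : Type) [AddCommGroup M] [AddCommGroup N] [AddCommGroup P]
    [Module k M] [Module k N] [Module k P] :
    (M ⊗[k] (N ⊗[k] P)) ≃ₗ[k] (P ⊗[k] (N ⊗[k] M)) :=
  (TensorProduct.congr (LinearEquiv.refl k M) (TensorProduct.comm k N P)).trans <|
    (TensorProduct.assoc k M P N).symm.trans <|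
      (TensorProduct.congr (TensorProduct.comm k M P) (LinearEquiv.refl k N)).trans <|
        (TensorProduct.assoc k P M N).trans
          (TensorProduct.congr (LinearEquiv.refl k P) (TensorProduct.comm k M N))

/-- `a ⊗ b ⊗ c ↦ S(c)(Q) ⊗ S(b) ⊗ S̃_δ(a)(P)`, expressing the para-antipode of the
double crossed product. -/
def dcpT (ρ : 𝓗 →ₗ[k] PAlg →ₗ[k] PAlg) (δ : 𝓗 →ₐ[k] k) (P Q : PAlg) :
    𝓗 ⊗[k] (𝓗 ⊗[k] 𝓗) →ₗ[k] PAlg ⊗[k] (𝓗 ⊗[k] PAlg) :=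
  (cyc3 (k := k) PAlg 𝓗 PAlg).toLinearMap ∘ₗ
    TensorProduct.map (ρ.flip P ∘ₗ twistedAntipode δ)
      (TensorProduct.map (HopfAlgebra.antipode (R := k))
        (ρ.flip Q ∘ₗ HopfAlgebra.antipode (R := k)))

/-- `x ⊗ y ↦ (P ⊗ x ⊗ 1) ⊗ (1 ⊗ y ⊗ Q)`, expressing the coproduct of the double
crossed product via a linear identification `e`. -/
def dcpΔ (e : (PAlg ⊗[k] (𝓗 ⊗[k] PAlg)) ≃ₗ[k] HH) (P Q : PAlg) :
    𝓗 ⊗[k] 𝓗 →ₗ[k] HH ⊗[k] HH :=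
  TensorProduct.map
    (e.toLinearMap ∘ₗ TensorProduct.mk k PAlg (𝓗 ⊗[k] PAlg) P ∘ₗ
      (TensorProduct.mk k 𝓗 PAlg).flip 1)
    (e.toLinearMap ∘ₗ TensorProduct.mk k PAlg (𝓗 ⊗[k] PAlg) 1 ∘ₗ
      (TensorProduct.mk k 𝓗 PAlg).flip Q)

end DoubleCrossedProduct


section Helpers

open Coalgebra HopfAlgebra WithConv

variable {k 𝓗 : Type} [Field k] [Ring 𝓗] [HopfAlgebra k 𝓗]

theorem sw_bil {X : Type} [AddCommGroup X] [Module k X] (f : 𝓗 → 𝓗 → X)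
    {h : 𝓗} {κ : Type} (r : Repr k h κ) {κ' : Type} (r' : Repr k h κ')
    (h1 : ∀ y, IsLinearMap k (fun x => f x y) := by
      intros; constructor <;> intros <;>
      simp [add_mul, mul_add, add_smul, smul_smul, smul_add, TensorProduct.add_tmul,
        TensorProduct.tmul_add, ← TensorProduct.smul_tmul', mul_comm])
    (h2 : ∀ x, IsLinearMap k (fun y => f x y) := by
      intros; constructor <;> intros <;>
      simp [add_mul, mul_add, add_smul, smul_smul, smul_add, TensorProduct.add_tmul,
        TensorProduct.tmul_add, ← TensorProduct.smul_tmul', mul_comm]) :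
    ∑ i ∈ r.index, f (r.left i) (r.right i) = ∑ i ∈ r'.index, f (r'.left i) (r'.right i) := by
  have := congrArg (TensorProduct.lift (LinearMap.mk₂ k f (fun a b c => (h1 c).map_add a b)
    (fun a b c => (h1 c).map_smul a b) (fun a b c => (h2 a).map_add b c)
    (fun a b c => (h2 b).map_smul a c))) (r.eq.trans r'.eq.symm)
  simpa using this

theorem sw_assoc {X : Type} [AddCommGroup X] [Module k X] (f : 𝓗 → 𝓗 → 𝓗 → X)
    {h : 𝓗} {κ : Type} (r : Repr k h κ) {κ1 κ2 : κ → Type}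
    (r1 : ∀ i, Repr k (r.left i) (κ1 i)) (r2 : ∀ i, Repr k (r.right i) (κ2 i))
    (h1 : ∀ y z, IsLinearMap k (fun x => f x y z) := by
      intros; constructor <;> intros <;>
      simp [add_mul, mul_add, add_smul, smul_smul, smul_add, TensorProduct.add_tmul,
        TensorProduct.tmul_add, ← TensorProduct.smul_tmul', mul_comm])
    (h2 : ∀ x z, IsLinearMap k (fun y => f x y z) := by
      intros; constructor <;> intros <;>
      simp [add_mul, mul_add, add_smul, smul_smul, smul_add, TensorProduct.add_tmul,
        TensorProduct.tmul_add, ← TensorProduct.smul_tmul', mul_comm])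
    (h3 : ∀ x y, IsLinearMap k (fun z => f x y z) := by
      intros; constructor <;> intros <;>
      simp [add_mul, mul_add, add_smul, smul_smul, smul_add, TensorProduct.add_tmul,
        TensorProduct.tmul_add, ← TensorProduct.smul_tmul', mul_comm]) :
    ∑ i ∈ r.index, ∑ j ∈ (r1 i).index, f ((r1 i).left j) ((r1 i).right j) (r.right i) =
    ∑ i ∈ r.index, ∑ j ∈ (r2 i).index, f (r.left i) ((r2 i).left j) ((r2 i).right j) := by
  let F : 𝓗 →ₗ[k] (𝓗 ⊗[k] 𝓗) →ₗ[k] X :=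
    { toFun := fun x => TensorProduct.lift (LinearMap.mk₂ k (f x)
        (fun a b c => (h2 x c).map_add a b)
        (fun a b c => (h2 x c).map_smul a b) (fun a b c => (h3 x a).map_add b c)
        (fun a b c => (h3 x b).map_smul a c))
      map_add' := fun x x' => by
        ext y z
        simpa using (h1 y z).map_add x x'
      map_smul' := fun c x => by
        ext y z
        simpa using (h1 y z).map_smul c x }
  have := congrArg (TensorProduct.lift F) (sum_tmul_tmul_eq r r1 r2)
  simpa [F] using this

local notation "S" => antipode k (A := 𝓗)

theorem comul_counit_r {h : 𝓗} {κ : Type} (r : Repr k h κ) :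
    ∑ i ∈ r.index, counit (R := k) (r.right i) • r.left i = h := by
  have := congrArg (TensorProduct.rid k 𝓗) (sum_tmul_counit_eq r)
  rw [map_sum] at this
  simpa only [TensorProduct.rid_tmul, one_smul] using this

theorem antipode_comul_aux {b : 𝓗} {κ : Type} (r : Repr k b κ) :
    ∑ i ∈ r.index, (S (r.left i) ⊗ₜ[k] (1 : 𝓗)) * comul (R := k) (r.right i) =
      (1 : 𝓗) ⊗ₜ[k] b := by
  have h := sw_assoc (fun x y z : 𝓗 => (S x * y) ⊗ₜ[k] z) r (fun i => ℛ k _) (fun i => ℛ k _)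
  calc _ = ∑ i ∈ r.index, ∑ j ∈ (ℛ k (r.right i)).index,
      (S (r.left i) * (ℛ k (r.right i)).left j) ⊗ₜ[k] (ℛ k (r.right i)).right j := by
        refine Finset.sum_congr rfl fun i _ => ?_
        rw [← (ℛ k (r.right i)).eq, Finset.mul_sum]
        simp
    _ = _ := by
        rw [← h]
        simp_rw [← TensorProduct.sum_tmul, sum_antipode_mul_eq_smul, TensorProduct.smul_tmul,
          ← TensorProduct.tmul_sum, sum_counit_smul]

theorem comul_antipode' (h : 𝓗) :
    comul (R := k) (S h) = TensorProduct.map S S (TensorProduct.comm k 𝓗 𝓗 (comul h)) := by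
  have key : toConv (TensorProduct.map S S ∘ₗ (TensorProduct.comm k 𝓗 𝓗).toLinearMap ∘ₗ comul) *
      toConv (comul (R := k) (A := 𝓗)) = 1 := by
    ext h
    rw [(ℛ k h).convMul_apply]
    have hh := sw_assoc (fun x y z : 𝓗 => (S y ⊗ₜ[k] S x) * comul (R := k) z) (ℛ k h)
      (fun i => ℛ k _) (fun i => ℛ k _)
    have e1 : ∀ i, TensorProduct.map S S (TensorProduct.comm k 𝓗 𝓗 (comul ((ℛ k h).left i))) *
        comul (R := k) ((ℛ k h).right i) = ∑ j ∈ (ℛ k ((ℛ k h).left i)).index,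
        (S ((ℛ k ((ℛ k h).left i)).right j) ⊗ₜ[k] S ((ℛ k ((ℛ k h).left i)).left j)) *
          comul (R := k) ((ℛ k h).right i) := by
      intro i
      rw [← (ℛ k ((ℛ k h).left i)).eq, ← Finset.sum_mul]
      simp
    simp only [LinearMap.comp_apply, LinearEquiv.coe_coe]
    rw [Finset.sum_congr rfl (fun i _ => e1 i), hh]
    have e2 : ∀ i, ∑ j ∈ (ℛ k ((ℛ k h).right i)).index,
        (S ((ℛ k ((ℛ k h).right i)).left j) ⊗ₜ[k] S ((ℛ k h).left i)) *
          comul (R := k) ((ℛ k ((ℛ k h).right i)).right j) =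
        (1 : 𝓗) ⊗ₜ[k] (S ((ℛ k h).left i) * (ℛ k h).right i) := by
      intro i
      have := antipode_comul_aux (ℛ k ((ℛ k h).right i))
      have h3 := congrArg (fun t => ((1 : 𝓗) ⊗ₜ[k] S ((ℛ k h).left i)) * t) this
      simpa [Finset.mul_sum, ← mul_assoc] using h3
    rw [Finset.sum_congr rfl (fun i _ => e2 i), ← TensorProduct.tmul_sum,
      sum_antipode_mul_eq_smul]
    simp [Algebra.TensorProduct.one_def, Algebra.algebraMap_eq_smul_one]
  have := left_inv_eq_right_inv key LinearMap.comul_right_inv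
  have := congrArg (fun f => f.ofConv h) this
  simpa using this.symm

variable (δ : 𝓗 →ₐ[k] k)

theorem tw_apply {h : 𝓗} {κ : Type} (r : Repr k h κ) :
    twistedAntipode δ h = ∑ i ∈ r.index, δ (r.left i) • S (r.right i) := by
  simp [twistedAntipode, ← r.eq]

def reprS {h : 𝓗} {κ : Type} (r : Repr k h κ) : Repr k (S h) κ where
  index := r.index
  left := fun i => S (r.right i)
  right := fun i => S (r.left i)
  eq := by rw [comul_antipode', ← r.eq]; simp

def reprT {h : 𝓗} {κ : Type} (r : Repr k h κ) : Repr k (twistedAntipode δ h) κ where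
  index := r.index
  left := fun i => S (r.right i)
  right := fun i => twistedAntipode δ (r.left i)
  eq := by
    have hh := sw_assoc (fun x y z : 𝓗 => δ x • (S z ⊗ₜ[k] S y)) r
      (fun i => ℛ k _) (fun i => ℛ k _)
    rw [tw_apply δ r, map_sum]
    simp_rw [map_smul]
    rw [Finset.sum_congr rfl (fun i _ => congrArg (fun t => δ (r.left i) • t)
      (reprS (ℛ k (r.right i))).eq.symm)]
    simp_rw [Finset.smul_sum]
    refine Eq.trans ?_ hh
    refine Finset.sum_congr rfl fun i _ => ?_
    rw [tw_apply δ (ℛ k (r.left i)), TensorProduct.tmul_sum]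
    simp

theorem tw_one : twistedAntipode δ (1 : 𝓗) = 1 := by
  simp [twistedAntipode, Algebra.TensorProduct.one_def]

theorem tw_mul (g h : 𝓗) :
    twistedAntipode δ (g * h) = twistedAntipode δ h * twistedAntipode δ g := by
  rw [tw_apply δ ((ℛ k g).mul (ℛ k h)), tw_apply δ (ℛ k g), tw_apply δ (ℛ k h)]
  simp only [Finset.sum_mul_sum]
  rw [Finset.sum_comm]
  simp [Finset.sum_product, antipode_mul_antidistrib, smul_smul, mul_comm]

theorem counit_tw (h : 𝓗) : counit (R := k) (twistedAntipode δ h) = δ h := by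
  rw [tw_apply δ (ℛ k h)]
  conv_rhs => rw [← comul_counit_r (k := k) (ℛ k h)]
  simp [mul_comm]

/-- `∑ S̃(h₁) h₂ = δ(h)` -/
theorem tw_mul_sum {h : 𝓗} {κ : Type} (r : Repr k h κ) :
    ∑ i ∈ r.index, twistedAntipode δ (r.left i) * r.right i = δ h • (1 : 𝓗) := by
  have hh := sw_assoc (fun x y z : 𝓗 => δ x • (S y * z)) r
    (fun i => ℛ k _) (fun i => ℛ k _)
  simp_rw [← Finset.smul_sum, sum_antipode_mul_eq_smul] at hh
  calc _ = _ := by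
        refine Finset.sum_congr rfl fun i _ => ?_
        rw [tw_apply δ (ℛ k (r.left i)), Finset.sum_mul]
        simp only [smul_mul_assoc]
    _ = _ := hh
    _ = _ := by
        conv_rhs => rw [← comul_counit_r (k := k) r]
        simp [Finset.sum_smul, smul_smul, mul_comm]

/-- `∑ S̃(h₂) h₁ = δ(h)` when `S̃² = id`. -/
theorem tw_mul_sum' (hS2 : ∀ h : 𝓗, twistedAntipode δ (twistedAntipode δ h) = h)
    {h : 𝓗} {κ : Type} (r : Repr k h κ) :
    ∑ i ∈ r.index, twistedAntipode δ (r.right i) * r.left i = δ h • (1 : 𝓗) := by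
  have := congrArg (twistedAntipode δ) (tw_mul_sum δ r)
  simpa [tw_mul, hS2, tw_one] using this

end Helpers

section Univ

open Coalgebra HopfAlgebra

variable {k 𝓗 PAlg : Type} [Field k] [Ring 𝓗] [HopfAlgebra k 𝓗]
  [Ring PAlg] [Algebra k PAlg]

/-- A "covariant representation" of the double crossed product in `X`. -/
structure DRel (ρ : 𝓗 →ₗ[k] PAlg →ₗ[k] PAlg) {X : Type} [Ring X] [Algebra k X]
    (a b : PAlg →ₗ[k] X) (c : 𝓗 →ₗ[k] X) : Prop where
  a_one : a 1 = 1
  b_one : b 1 = 1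
  c_one : c 1 = 1
  a_mul : ∀ p q, a (p * q) = a p * a q
  b_mul : ∀ p q, b (p * q) = b q * b p
  c_mul : ∀ g h, c (g * h) = c g * c h
  ab : ∀ p q, a p * b q = b q * a p
  ca : ∀ (h : 𝓗) (p : PAlg) {κ : Type} (r : Repr k h κ),
    c h * a p = ∑ i ∈ r.index, a (ρ (r.left i) p) * c (r.right i)
  cb : ∀ (h : 𝓗) (p : PAlg) {κ : Type} (r : Repr k h κ),
    c h * b p = ∑ i ∈ r.index, b (ρ (r.right i) p) * c (r.left i)

variable {ρ : 𝓗 →ₗ[k] PAlg →ₗ[k] PAlg}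

def phiLin {X : Type} [Ring X] [Algebra k X] (a b : PAlg →ₗ[k] X) (c : 𝓗 →ₗ[k] X) :
    PAlg ⊗[k] (𝓗 ⊗[k] PAlg) →ₗ[k] X :=
  LinearMap.mul' k X ∘ₗ TensorProduct.map a
    (LinearMap.mul' k X ∘ₗ TensorProduct.map b c ∘ₗ (TensorProduct.comm k 𝓗 PAlg).toLinearMap)

@[simp] theorem phiLin_tmul {X : Type} [Ring X] [Algebra k X] (a b : PAlg →ₗ[k] X)
    (c : 𝓗 →ₗ[k] X) (p q : PAlg) (h : 𝓗) :
    phiLin a b c (p ⊗ₜ[k] (h ⊗ₜ[k] q)) = a p * (b q * c h) := by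
  simp [phiLin]

variable {HH : Type} [Ring HH] [Algebra k HH] {A B : PAlg →ₗ[k] HH} {ι : 𝓗 →ₗ[k] HH}

theorem hh_ind (e : (PAlg ⊗[k] (𝓗 ⊗[k] PAlg)) ≃ₗ[k] HH)
    (he : ∀ p q h, e (p ⊗ₜ[k] (h ⊗ₜ[k] q)) = A p * (B q * ι h))
    (motive : HH → Prop) (h0 : motive 0)
    (hadd : ∀ x y, motive x → motive y → motive (x + y))
    (hm : ∀ p q h, motive (A p * (B q * ι h))) (x : HH) : motive x := by
  obtain ⟨t, rfl⟩ := e.surjective x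
  induction t using TensorProduct.induction_on with
  | zero => simpa using h0
  | add x y hx hy => rw [map_add]; exact hadd _ _ hx hy
  | tmul p t =>
    induction t using TensorProduct.induction_on with
    | zero => simpa using h0
    | add x y hx hy => rw [TensorProduct.tmul_add, map_add]; exact hadd _ _ hx hy
    | tmul h q => rw [he]; exact hm p q h

theorem phi_hom (e : (PAlg ⊗[k] (𝓗 ⊗[k] PAlg)) ≃ₗ[k] HH)
    (he : ∀ p q h, e (p ⊗ₜ[k] (h ⊗ₜ[k] q)) = A p * (B q * ι h))
    (R : DRel ρ A B ι) {X : Type} [Ring X] [Algebra k X] {a b : PAlg →ₗ[k] X}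
    {c : 𝓗 →ₗ[k] X} (R' : DRel ρ a b c) :
    ∃ Φ : HH →ₐ[k] X, (∀ p, Φ (A p) = a p) ∧ (∀ p, Φ (B p) = b p) ∧ (∀ h, Φ (ι h) = c h) := by
  let F : HH →ₗ[k] X := phiLin a b c ∘ₗ e.symm.toLinearMap
  have hF : ∀ p q h, F (A p * (B q * ι h)) = a p * (b q * c h) := by
    intro p q h; rw [← he]; simp [F]
  have FA : ∀ p, F (A p) = a p := by
    intro p
    simpa [R.b_one, R.c_one, R'.b_one, R'.c_one] using hF p 1 1
  have FB : ∀ p, F (B p) = b p := by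
    intro p
    simpa [R.a_one, R.c_one, R'.a_one, R'.c_one] using hF 1 p 1
  have Fc : ∀ p, F (ι p) = c p := by
    intro p
    simpa [R.a_one, R.b_one, R'.a_one, R'.b_one] using hF 1 1 p
  have mA : ∀ p y, F (A p * y) = a p * F y := by
    intro p y
    induction y using hh_ind e he with
    | h0 => simp
    | hadd x y hx hy => simp [mul_add, hx, hy]
    | hm p' q' h' => rw [← mul_assoc, ← R.a_mul, hF, hF, R'.a_mul, mul_assoc]
  have mB : ∀ p y, F (B p * y) = b p * F y := by
    intro p y
    induction y using hh_ind e he with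
    | h0 => simp
    | hadd x y hx hy => simp [mul_add, hx, hy]
    | hm p' q' h' =>
      rw [← mul_assoc, ← R.ab, mul_assoc, ← mul_assoc (B p), ← R.b_mul, hF, hF, R'.b_mul,
        ← mul_assoc (b p), ← R'.ab]
      simp only [mul_assoc]
  have mc : ∀ y h, F (ι h * y) = c h * F y := by
    intro y
    induction y using hh_ind e he with
    | h0 => simp
    | hadd x y hx hy => intro h; simp [mul_add, hx, hy]
    | hm p' q' h' =>
      have s1 : ∀ h, F (ι h * ι h') = c h * F (ι h') := by
        intro h; rw [← R.c_mul, Fc, Fc, R'.c_mul]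
      have s2 : ∀ h, F (ι h * (B q' * ι h')) = c h * F (B q' * ι h') := by
        intro h
        rw [mB, ← mul_assoc, ← mul_assoc (c h), R.cb h q' (ℛ k h), R'.cb h q' (ℛ k h)]
        simp only [Finset.sum_mul, map_sum, mul_assoc, mB, s1]
      intro h
      rw [mA, ← mul_assoc (ι h), ← mul_assoc (c h), R.ca h p' (ℛ k h), R'.ca h p' (ℛ k h)]
      simp only [Finset.sum_mul, map_sum, mul_assoc, mA, s2]
  refine ⟨AlgHom.ofLinearMap F ?_ ?_, FA, FB, Fc⟩
  · rw [← R.a_one, FA, R'.a_one]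
  · intro x y
    induction x using hh_ind e he with
    | h0 => simp
    | hadd x y hx hy => simp [add_mul, hx, hy]
    | hm p' q' h' => rw [mul_assoc, mul_assoc, mA, mB, mc, hF]; simp only [mul_assoc]

/-- The covariant representation giving the coproduct. -/
theorem drel_delta (R : DRel ρ A B ι) :
    DRel ρ (TensorProduct.mk k HH HH |>.flip 1 |>.comp A) (TensorProduct.mk k HH HH 1 |>.comp B)
      (TensorProduct.map ι ι ∘ₗ comul) where
  a_one := by simp [R.a_one, Algebra.TensorProduct.one_def]
  b_one := by simp [R.b_one, Algebra.TensorProduct.one_def]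
  c_one := by simp [R.c_one, Algebra.TensorProduct.one_def]
  a_mul := by simp [R.a_mul]
  b_mul := by simp [R.b_mul]
  c_mul g h := by
    simp only [LinearMap.comp_apply, Bialgebra.comul_mul]
    rw [← (ℛ k g).eq, ← (ℛ k h).eq]
    simp [Finset.sum_mul_sum, R.c_mul]
  ab := by simp
  ca h p κ r := by
    have hh := sw_assoc (fun x y z : 𝓗 => (A (ρ x p) * ι y) ⊗ₜ[k] ι z) r
      (fun i => ℛ k _) (fun i => ℛ k _)
    calc _ = _ := by
          simp only [LinearMap.comp_apply]
          rw [← r.eq]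
          simp only [map_sum, TensorProduct.map_tmul, LinearMap.flip_apply,
            TensorProduct.mk_apply, Finset.sum_mul, Algebra.TensorProduct.tmul_mul_tmul, mul_one]
          refine Finset.sum_congr rfl fun i _ => ?_
          rw [R.ca _ p (ℛ k _), TensorProduct.sum_tmul]
      _ = _ := hh
      _ = _ := by
          refine Finset.sum_congr rfl fun i _ => ?_
          simp only [LinearMap.comp_apply]
          rw [← (ℛ k (r.right i)).eq]
          simp [Finset.mul_sum]
  cb h p κ r := by
    have hh := sw_assoc (fun x y z : 𝓗 => ι x ⊗ₜ[k] (B (ρ z p) * ι y)) r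
      (fun i => ℛ k _) (fun i => ℛ k _)
    calc _ = _ := by
          simp only [LinearMap.comp_apply]
          rw [← r.eq]
          simp only [map_sum, TensorProduct.map_tmul, LinearMap.flip_apply,
            TensorProduct.mk_apply, Finset.sum_mul, Algebra.TensorProduct.tmul_mul_tmul, mul_one]
          refine Finset.sum_congr rfl fun i _ => ?_
          rw [R.cb _ p (ℛ k _), TensorProduct.tmul_sum]
      _ = _ := hh.symm
      _ = _ := by
          refine Finset.sum_congr rfl fun i _ => ?_
          simp only [LinearMap.comp_apply]
          rw [← (ℛ k (r.left i)).eq]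
          simp [Finset.mul_sum]

variable (δ : 𝓗 →ₐ[k] k)

/-- The covariant representation giving the para-antipode. -/
theorem drel_T (R : DRel ρ A B ι)
    (hρ1 : ∀ p : PAlg, ρ 1 p = p)
    (hρmul : ∀ (g h : 𝓗) (p : PAlg), ρ (g * h) p = ρ g (ρ h p))
    (hS2 : ∀ h : 𝓗, twistedAntipode δ (twistedAntipode δ h) = h) :
    DRel ρ ((MulOpposite.opLinearEquiv k).toLinearMap ∘ₗ B)
      ((MulOpposite.opLinearEquiv k).toLinearMap ∘ₗ A)
      ((MulOpposite.opLinearEquiv k).toLinearMap ∘ₗ ι ∘ₗ twistedAntipode δ) where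
  a_one := by simp [R.b_one]
  b_one := by simp [R.a_one]
  c_one := by simp [tw_one, R.c_one]
  a_mul := by simp [R.b_mul]
  b_mul := by simp [R.a_mul]
  c_mul g h := by simp [tw_mul, R.c_mul]
  ab p q := by simp [← MulOpposite.op_mul, R.ab]
  ca h p κ r := by
    have hh := sw_assoc (fun x y z : 𝓗 => B (ρ (twistedAntipode δ y * x) p) *
      ι (antipode k z)) r (fun i => ℛ k _) (fun i => ℛ k _)
    have key : B p * ι (twistedAntipode δ h) =
        ∑ i ∈ r.index, ι (twistedAntipode δ (r.right i)) * B (ρ (r.left i) p) := by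
      calc _ = _ := by
            rw [tw_apply δ r]
            simp only [map_sum, Finset.mul_sum]
            refine Finset.sum_congr rfl fun i _ => ?_
            rw [← Finset.sum_mul, ← map_sum, ← LinearMap.sum_apply, ← map_sum,
              tw_mul_sum' δ hS2]
            simp [hρ1]
        _ = _ := hh
        _ = _ := by
            refine Finset.sum_congr rfl fun i _ => ?_
            rw [R.cb _ _ (reprT δ (ℛ k (r.right i)))]
            simp [reprT, hρmul]
    simpa [← MulOpposite.op_mul, ← Finset.op_sum] using key
  cb h p κ r := by
    have hh := sw_assoc (fun x y z : 𝓗 => A (ρ (antipode k y * z) p) *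
      ι (twistedAntipode δ x)) r (fun i => ℛ k _) (fun i => ℛ k _)
    have key : A p * ι (twistedAntipode δ h) =
        ∑ i ∈ r.index, ι (twistedAntipode δ (r.left i)) * A (ρ (r.right i) p) := by
      calc _ = _ := by
            conv_lhs => rw [← comul_counit_r (k := k) r]
            simp only [map_sum, Finset.mul_sum]
            refine Finset.sum_congr rfl fun i _ => ?_
            rw [← Finset.sum_mul, ← map_sum, ← LinearMap.sum_apply, ← map_sum,
              sum_antipode_mul_eq_smul]
            simp [hρ1]
        _ = _ := hh.symm
        _ = _ := by
            refine Finset.sum_congr rfl fun i _ => ?_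
            rw [R.ca _ _ (reprT δ (ℛ k (r.left i)))]
            simp [reprT, hρmul]
    simpa [← MulOpposite.op_mul, ← Finset.op_sum] using key

theorem sum_beta (R : DRel ρ A B ι) (f : 𝓗 →ₗ[k] 𝓗)
    (rf : ∀ {h : 𝓗} {κ : Type} (r : Repr k h κ),
      comul (R := k) (f h) = ∑ i ∈ r.index, antipode k (r.right i) ⊗ₜ[k] f (r.left i))
    (q : PAlg) {h : 𝓗} {κ : Type} (r : Repr k h κ) :
    ∑ i ∈ r.index, ι (f (r.left i)) * (B q * ι (r.right i)) = B (ρ (f h) q) := by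
  have hh := sw_assoc (fun x y z : 𝓗 => B (ρ (f x) q) * ι (antipode k y * z)) r
    (fun i => ℛ k _) (fun i => ℛ k _)
  calc _ = _ := by
        refine Finset.sum_congr rfl fun i _ => ?_
        rw [← mul_assoc, R.cb _ _ ⟨_, _, _, (rf (ℛ k (r.left i))).symm⟩]
        simp only [Finset.sum_mul, mul_assoc, ← R.c_mul]
    _ = _ := hh
    _ = _ := by
        conv_rhs => rw [← comul_counit_r (k := k) r]
        simp only [map_sum, LinearMap.sum_apply]
        refine Finset.sum_congr rfl fun i _ => ?_
        rw [← Finset.mul_sum, ← map_sum, sum_antipode_mul_eq_smul]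
        simp [R.c_one]

end Univ

section Base

open Coalgebra HopfAlgebra

variable {k 𝓗 PAlg HH : Type} [Field k] [Ring 𝓗] [HopfAlgebra k 𝓗]
  [Ring PAlg] [Algebra k PAlg] [Ring HH] [Algebra k HH]

theorem comul2_one : comul2 (k := k) (1 : 𝓗) = 1 ⊗ₜ[k] (1 ⊗ₜ[k] 1) := by
  simp [comul2, Algebra.TensorProduct.one_def]

theorem comul2_repr {h : 𝓗} {κ : Type} (r : Repr k h κ) {κ2 : κ → Type}
    (r2 : ∀ i, Repr k (r.right i) (κ2 i)) :
    comul2 (k := k) h = ∑ i ∈ r.index, ∑ j ∈ (r2 i).index,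
      r.left i ⊗ₜ[k] ((r2 i).left j ⊗ₜ[k] (r2 i).right j) := by
  simp [comul2, ← r.eq, (r2 _).eq, ← TensorProduct.tmul_sum]

theorem sum_cl {X : Type} [AddCommGroup X] [Module k X] (f : 𝓗 →ₗ[k] X)
    {h : 𝓗} {κ : Type} (r : Repr k h κ) :
    ∑ i ∈ r.index, counit (R := k) (r.left i) • f (r.right i) = f h := by
  conv_rhs => rw [← sum_counit_smul (R := k) r]
  simp

theorem sum_cr {X : Type} [AddCommGroup X] [Module k X] (f : 𝓗 →ₗ[k] X)
    {h : 𝓗} {κ : Type} (r : Repr k h κ) :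
    ∑ i ∈ r.index, counit (R := k) (r.right i) • f (r.left i) = f h := by
  conv_rhs => rw [← comul_counit_r (k := k) r]
  simp

theorem base_mul (ρ : 𝓗 →ₗ[k] PAlg →ₗ[k] PAlg)
    (e : (PAlg ⊗[k] (𝓗 ⊗[k] PAlg)) ≃ₗ[k] HH)
    (hemul : ∀ (P₁ P₂ Q₁ Q₂ : PAlg) (h₁ h₂ : 𝓗),
      e (P₁ ⊗ₜ[k] (h₁ ⊗ₜ[k] Q₁)) * e (P₂ ⊗ₜ[k] (h₂ ⊗ₜ[k] Q₂)) =
        e (dcpMul ρ P₁ P₂ Q₁ Q₂ h₂ (comul2 h₁))) (p q : PAlg) (h g : 𝓗) {κ : Type}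
    (r : Repr k h κ) {κ2 : κ → Type} (r2 : ∀ i, Repr k (r.right i) (κ2 i)) :
    e (1 ⊗ₜ[k] (h ⊗ₜ[k] 1)) * e (p ⊗ₜ[k] (g ⊗ₜ[k] q)) = ∑ i ∈ r.index, ∑ j ∈ (r2 i).index,
      e (ρ (r.left i) p ⊗ₜ[k] (((r2 i).left j * g) ⊗ₜ[k] ρ ((r2 i).right j) q)) := by
  rw [hemul, comul2_repr r r2]
  simp [dcpMul]

def bA (e : (PAlg ⊗[k] (𝓗 ⊗[k] PAlg)) ≃ₗ[k] HH) : PAlg →ₗ[k] HH :=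
  e.toLinearMap ∘ₗ (TensorProduct.mk k PAlg (𝓗 ⊗[k] PAlg)).flip (1 ⊗ₜ[k] 1)

def bB (e : (PAlg ⊗[k] (𝓗 ⊗[k] PAlg)) ≃ₗ[k] HH) : PAlg →ₗ[k] HH :=
  e.toLinearMap ∘ₗ TensorProduct.mk k PAlg (𝓗 ⊗[k] PAlg) 1 ∘ₗ TensorProduct.mk k 𝓗 PAlg 1

def bI (e : (PAlg ⊗[k] (𝓗 ⊗[k] PAlg)) ≃ₗ[k] HH) : 𝓗 →ₗ[k] HH :=
  e.toLinearMap ∘ₗ TensorProduct.mk k PAlg (𝓗 ⊗[k] PAlg) 1 ∘ₗ (TensorProduct.mk k 𝓗 PAlg).flip 1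

theorem bA_apply (e : (PAlg ⊗[k] (𝓗 ⊗[k] PAlg)) ≃ₗ[k] HH) (p : PAlg) :
    bA e p = e (p ⊗ₜ[k] (1 ⊗ₜ[k] 1)) := rfl

theorem bB_apply (e : (PAlg ⊗[k] (𝓗 ⊗[k] PAlg)) ≃ₗ[k] HH) (p : PAlg) :
    bB e p = e (1 ⊗ₜ[k] (1 ⊗ₜ[k] p)) := rfl

theorem bI_apply (e : (PAlg ⊗[k] (𝓗 ⊗[k] PAlg)) ≃ₗ[k] HH) (h : 𝓗) :
    bI e h = e (1 ⊗ₜ[k] (h ⊗ₜ[k] 1)) := rfl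

theorem base_he (ρ : 𝓗 →ₗ[k] PAlg →ₗ[k] PAlg)
    (hρ1 : ∀ p : PAlg, ρ 1 p = p)
    (e : (PAlg ⊗[k] (𝓗 ⊗[k] PAlg)) ≃ₗ[k] HH)
    (hemul : ∀ (P₁ P₂ Q₁ Q₂ : PAlg) (h₁ h₂ : 𝓗),
      e (P₁ ⊗ₜ[k] (h₁ ⊗ₜ[k] Q₁)) * e (P₂ ⊗ₜ[k] (h₂ ⊗ₜ[k] Q₂)) =
        e (dcpMul ρ P₁ P₂ Q₁ Q₂ h₂ (comul2 h₁))) (p q : PAlg) (h : 𝓗) :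
    e (p ⊗ₜ[k] (h ⊗ₜ[k] q)) = bA e p * (bB e q * bI e h) := by
  simp only [bA_apply, bB_apply, bI_apply, hemul, comul2_one]
  simp [dcpMul, hρ1, hemul, comul2_one]

theorem base_rel (ρ : 𝓗 →ₗ[k] PAlg →ₗ[k] PAlg)
    (hρ1 : ∀ p : PAlg, ρ 1 p = p)
    (hρalg1 : ∀ h : 𝓗, ρ h (1 : PAlg) = counit (R := k) h • (1 : PAlg))
    (e : (PAlg ⊗[k] (𝓗 ⊗[k] PAlg)) ≃ₗ[k] HH)
    (he1 : e ((1 : PAlg) ⊗ₜ[k] ((1 : 𝓗) ⊗ₜ[k] (1 : PAlg))) = 1)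
    (hemul : ∀ (P₁ P₂ Q₁ Q₂ : PAlg) (h₁ h₂ : 𝓗),
      e (P₁ ⊗ₜ[k] (h₁ ⊗ₜ[k] Q₁)) * e (P₂ ⊗ₜ[k] (h₂ ⊗ₜ[k] Q₂)) =
        e (dcpMul ρ P₁ P₂ Q₁ Q₂ h₂ (comul2 h₁))) :
    DRel ρ (bA e) (bB e) (bI e) where
  a_one := he1
  b_one := he1
  c_one := he1
  a_mul p q := by simp [bA_apply, hemul, comul2_one, dcpMul, hρ1]
  b_mul p q := by simp [bB_apply, hemul, comul2_one, dcpMul, hρ1]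
  ab p q := by simp [bA_apply, bB_apply, hemul, comul2_one, dcpMul, hρ1]
  c_mul g h := by
    rw [bI_apply, bI_apply, bI_apply, base_mul ρ e hemul 1 1 g h (ℛ k g) (fun i => ℛ k _)]
    simp only [hρalg1]
    refine (sum_cl (bI e ∘ₗ LinearMap.mulRight k h) (ℛ k g)).symm.trans ?_
    refine Finset.sum_congr rfl fun i _ => ?_
    rw [← sum_cr (bI e ∘ₗ LinearMap.mulRight k h) (ℛ k ((ℛ k g).right i)), Finset.smul_sum]
    refine Finset.sum_congr rfl fun j _ => ?_
    simp [bI_apply, TensorProduct.tmul_smul, ← TensorProduct.smul_tmul', smul_smul, mul_comm]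
  ca h p κ r := by
    rw [bI_apply, bA_apply, base_mul ρ e hemul p 1 h 1 r (fun i => ℛ k _)]
    refine Finset.sum_congr rfl fun i _ => ?_
    have h1 : bA e (ρ (r.left i) p) * bI e (r.right i) =
        e (ρ (r.left i) p ⊗ₜ[k] (r.right i ⊗ₜ[k] 1)) := by
      rw [base_he ρ hρ1 e hemul, show bB e 1 = 1 from he1, one_mul]
    rw [h1]
    simp only [hρalg1, mul_one]
    have := sum_cr (e.toLinearMap ∘ₗ TensorProduct.mk k PAlg (𝓗 ⊗[k] PAlg) (ρ (r.left i) p) ∘ₗ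
      (TensorProduct.mk k 𝓗 PAlg).flip 1) (ℛ k (r.right i))
    simpa [TensorProduct.tmul_smul] using this
  cb h p κ r := by
    rw [bI_apply, bB_apply, base_mul ρ e hemul 1 p h 1 (ℛ k h) (fun i => ℛ k _)]
    have h1 : ∀ x y, bB e x * bI e y = e (1 ⊗ₜ[k] (y ⊗ₜ[k] x)) := by
      intro x y
      rw [base_he ρ hρ1 e hemul, show bA e 1 = 1 from he1, one_mul]
    simp only [h1]
    simp only [hρalg1, mul_one]
    have := sum_cl (e.toLinearMap ∘ₗ TensorProduct.mk k PAlg (𝓗 ⊗[k] PAlg) 1 ∘ₗ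
      TensorProduct.map LinearMap.id (ρ.flip p) ∘ₗ comul) (ℛ k h)
    refine Eq.trans ?_ (this.trans ?_)
    · refine Finset.sum_congr rfl fun i _ => ?_
      simp only [LinearMap.comp_apply]
      rw [← (ℛ k ((ℛ k h).right i)).eq]
      simp [TensorProduct.tmul_sum, ← TensorProduct.smul_tmul', Finset.smul_sum]
    · simp only [LinearMap.comp_apply]
      rw [← r.eq]
      simp [TensorProduct.tmul_sum]

end Base

section Core

open Coalgebra HopfAlgebra

variable {k 𝓗 PAlg HH : Type} [Field k] [Ring 𝓗] [HopfAlgebra k 𝓗]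
  [Ring PAlg] [Algebra k PAlg] [Ring HH] [Algebra k HH]
  {ρ : 𝓗 →ₗ[k] PAlg →ₗ[k] PAlg} {A B : PAlg →ₗ[k] HH} {ι : 𝓗 →ₗ[k] HH}

theorem pi2_rel (D : PreBialgebroid k HH PAlg) (r : PAlg) (x y : HH) :
    D.π2 ((D.β r * x) ⊗ₜ[k] y) = D.π2 (x ⊗ₜ[k] (D.α r * y)) := by
  rw [← sub_eq_zero, ← map_sub]
  unfold PreBialgebroid.π2
  rw [Submodule.mkQ_apply, Submodule.Quotient.mk_eq_zero]
  exact Submodule.subset_span ⟨r, x, y, rfl⟩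

theorem mulL_tmul (f : HH →ₗ[k] HH) (x y : HH) :
    PreBialgebroid.mulL f (x ⊗ₜ[k] y) = f x * y := rfl

theorem mulR_tmul (f : HH →ₗ[k] HH) (x y : HH) :
    PreBialgebroid.mulR f (x ⊗ₜ[k] y) = f y * x := rfl

theorem tau2_tmul (D : PreBialgebroid k HH PAlg) (T : HH →ₗ[k] HH) (x y : HH) :
    D.tau2 T (x ⊗ₜ[k] y) = D.Δ (T x) * (y ⊗ₜ[k] 1) := rfl

/-- The underlying data, from the coproduct algebra map. -/
def bigD (R : DRel ρ A B ι) (e : (PAlg ⊗[k] (𝓗 ⊗[k] PAlg)) ≃ₗ[k] HH)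
    (Φ : HH →ₐ[k] HH ⊗[k] HH) : PreBialgebroid k HH PAlg where
  α := AlgHom.ofLinearMap A R.a_one R.a_mul
  β := B
  β_one := R.b_one
  β_mul := R.b_mul
  αβ_comm := R.ab
  Δ := Φ.toLinearMap
  ε := phiLin LinearMap.id LinearMap.id (Algebra.linearMap k PAlg ∘ₗ counit) ∘ₗ e.symm.toLinearMap

theorem delta_repr {Φ : HH →ₐ[k] HH ⊗[k] HH}
    (ΦA : ∀ p, Φ (A p) = A p ⊗ₜ[k] 1) (ΦB : ∀ p, Φ (B p) = 1 ⊗ₜ[k] B p)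
    (Φι : ∀ h, Φ (ι h) = TensorProduct.map ι ι (comul h))
    (p q : PAlg) {h : 𝓗} {κ : Type} (r : Repr k h κ) :
    Φ (A p * (B q * ι h)) =
      ∑ i ∈ r.index, (A p * ι (r.left i)) ⊗ₜ[k] (B q * ι (r.right i)) := by
  rw [map_mul, map_mul, ΦA, ΦB, Φι, ← r.eq]
  simp [Finset.mul_sum]

theorem bigD_eps (R : DRel ρ A B ι) (e : (PAlg ⊗[k] (𝓗 ⊗[k] PAlg)) ≃ₗ[k] HH)
    (he : ∀ p q h, e (p ⊗ₜ[k] (h ⊗ₜ[k] q)) = A p * (B q * ι h))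
    (Φ : HH →ₐ[k] HH ⊗[k] HH) (p q : PAlg) (h : 𝓗) :
    (bigD R e Φ).ε (A p * (B q * ι h)) = counit (R := k) h • (p * q) := by
  rw [← he]
  simp [bigD, Algebra.algebraMap_eq_smul_one]

theorem bigD_bialg (R : DRel ρ A B ι) (e : (PAlg ⊗[k] (𝓗 ⊗[k] PAlg)) ≃ₗ[k] HH)
    (he : ∀ p q h, e (p ⊗ₜ[k] (h ⊗ₜ[k] q)) = A p * (B q * ι h))
    {Φ : HH →ₐ[k] HH ⊗[k] HH}
    (ΦA : ∀ p, Φ (A p) = A p ⊗ₜ[k] 1) (ΦB : ∀ p, Φ (B p) = 1 ⊗ₜ[k] B p)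
    (Φι : ∀ h, Φ (ι h) = TensorProduct.map ι ι (comul h)) :
    (bigD R e Φ).IsBialgebroid where
  Δ_one := by
    change (bigD R e Φ).π2 (Φ 1) = _
    rw [map_one, Algebra.TensorProduct.one_def]
  coassoc x := by
    congr 1
    change (Algebra.TensorProduct.assoc k k k HH HH HH).toAlgHom
      (Algebra.TensorProduct.map Φ (AlgHom.id k HH) (Φ x)) =
      Algebra.TensorProduct.map (AlgHom.id k HH) Φ (Φ x)
    induction x using hh_ind e he with
    | h0 => simp
    | hadd x y hx hy => rw [map_add, map_add, map_add, map_add, hx, hy]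
    | hm p q h =>
      simp only [map_mul, ΦA, ΦB, Φι, Algebra.TensorProduct.map_tmul, map_one]
      congr 1
      congr 1
      have hh := sw_assoc (fun x y z : 𝓗 => ι x ⊗ₜ[k] (ι y ⊗ₜ[k] ι z)) (ℛ k h)
        (fun i => ℛ k _) (fun i => ℛ k _)
      rw [← (ℛ k h).eq]
      simp only [map_sum, TensorProduct.map_tmul, Algebra.TensorProduct.map_tmul, Φι]
      refine Eq.trans ?_ (hh.trans ?_)
      · refine Finset.sum_congr rfl fun i _ => ?_
        rw [← (ℛ k ((ℛ k h).left i)).eq]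
        simp [TensorProduct.sum_tmul]
      · refine Finset.sum_congr rfl fun i _ => ?_
        rw [← (ℛ k ((ℛ k h).right i)).eq]
        simp [TensorProduct.tmul_sum]
  Δ_cp3 x s := by
    change (bigD R e Φ).π2 (Φ x * (B s ⊗ₜ[k] 1 - 1 ⊗ₜ[k] A s)) = 0
    induction x using hh_ind e he with
    | h0 => simp
    | hadd x y hx hy => rw [map_add, add_mul, map_add, hx, hy, add_zero]
    | hm p q h =>
      rw [mul_sub, map_sub, sub_eq_zero, delta_repr ΦA ΦB Φι p q (ℛ k h)]
      have hh := sw_assoc (fun x y z : 𝓗 =>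
        (bigD R e Φ).π2 ((A p * ι x) ⊗ₜ[k] (A (ρ y s) * (B q * ι z)))) (ℛ k h)
        (fun i => ℛ k _) (fun i => ℛ k _)
      simp only [Finset.sum_mul, Algebra.TensorProduct.tmul_mul_tmul, mul_one, map_sum]
      refine Eq.trans ?_ (hh.trans ?_)
      · refine Finset.sum_congr rfl fun i _ => ?_
        rw [mul_assoc, R.cb _ _ (ℛ k ((ℛ k h).left i)), Finset.mul_sum, TensorProduct.sum_tmul,
          map_sum]
        refine Finset.sum_congr rfl fun j _ => ?_
        rw [← mul_assoc, R.ab, mul_assoc]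
        exact pi2_rel (bigD R e Φ) _ _ _
      · refine Finset.sum_congr rfl fun i _ => ?_
        rw [mul_assoc, R.ca _ _ (ℛ k ((ℛ k h).right i)), Finset.mul_sum, TensorProduct.tmul_sum,
          map_sum]
        refine Finset.sum_congr rfl fun j _ => ?_
        rw [← mul_assoc, R.ab, mul_assoc]
  Δ_mul a b := congrArg _ (map_mul Φ a b)
  Δ_left r x := by
    congr 1
    change Φ (A r * x) = A r ⊗ₜ[k] 1 * Φ x
    rw [map_mul, ΦA]
  Δ_right r x := by
    congr 1
    change Φ (B r * x) = 1 ⊗ₜ[k] B r * Φ x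
    rw [map_mul, ΦB]
  ε_one := by
    have := bigD_eps R e he Φ 1 1 1
    simpa [R.a_one, R.b_one, R.c_one] using this
  ε_left r x := by
    change (bigD R e Φ).ε (A r * x) = _
    induction x using hh_ind e he with
    | h0 => simp
    | hadd x y hx hy => rw [mul_add, map_add, hx, hy, map_add, mul_add]
    | hm p q h =>
      rw [← mul_assoc, ← R.a_mul, bigD_eps R e he, bigD_eps R e he, mul_smul_comm, mul_assoc]
  ε_right r x := by
    change (bigD R e Φ).ε (B r * x) = _
    induction x using hh_ind e he with
    | h0 => simp
    | hadd x y hx hy => rw [mul_add, map_add, hx, hy, map_add, add_mul]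
    | hm p q h =>
      rw [← mul_assoc, ← R.ab, mul_assoc, ← mul_assoc (B r), ← R.b_mul, bigD_eps R e he,
        bigD_eps R e he, smul_mul_assoc, mul_assoc]
  counit_l x := by
    change PreBialgebroid.mulL _ (Φ x) = x
    induction x using hh_ind e he with
    | h0 => simp
    | hadd x y hx hy => rw [map_add, map_add, hx, hy]
    | hm p q h =>
      rw [delta_repr ΦA ΦB Φι p q (ℛ k h), map_sum]
      have : ∀ g, (bigD R e Φ).ε (A p * ι g) = counit (R := k) g • p := by
        intro g
        have := bigD_eps R e he Φ p 1 g
        simpa [R.b_one] using this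
      simp only [mulL_tmul, LinearMap.comp_apply, this]
      rw [← sum_cl ι (ℛ k h)]
      simp only [Finset.mul_sum]
      refine Finset.sum_congr rfl fun i _ => ?_
      rw [map_smul, smul_mul_assoc, mul_smul_comm, mul_smul_comm]
      rfl
  counit_r x := by
    change PreBialgebroid.mulR _ (Φ x) = x
    induction x using hh_ind e he with
    | h0 => simp
    | hadd x y hx hy => rw [map_add, map_add, hx, hy]
    | hm p q h =>
      rw [delta_repr ΦA ΦB Φι p q (ℛ k h), map_sum]
      have : ∀ g, (bigD R e Φ).ε (B q * ι g) = counit (R := k) g • q := by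
        intro g
        have := bigD_eps R e he Φ 1 q g
        simpa [R.a_one] using this
      simp only [mulR_tmul, LinearMap.comp_apply, this]
      rw [← sum_cr ι (ℛ k h)]
      simp only [Finset.mul_sum]
      refine Finset.sum_congr rfl fun i _ => ?_
      rw [map_smul, smul_mul_assoc, mul_smul_comm, mul_smul_comm, ← mul_assoc (A p), R.ab,
        mul_assoc]
      rfl

theorem bigD_paraHopf (R : DRel ρ A B ι) (e : (PAlg ⊗[k] (𝓗 ⊗[k] PAlg)) ≃ₗ[k] HH)
    (he : ∀ p q h, e (p ⊗ₜ[k] (h ⊗ₜ[k] q)) = A p * (B q * ι h))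
    {Φ : HH →ₐ[k] HH ⊗[k] HH}
    (ΦA : ∀ p, Φ (A p) = A p ⊗ₜ[k] 1) (ΦB : ∀ p, Φ (B p) = 1 ⊗ₜ[k] B p)
    (Φι : ∀ h, Φ (ι h) = TensorProduct.map ι ι (comul h))
    (δ : 𝓗 →ₐ[k] k)
    (hS2 : ∀ h : 𝓗, twistedAntipode δ (twistedAntipode δ h) = h)
    (hρalgmul : ∀ (h : 𝓗) (p q : PAlg) {κ : Type} (r : Repr k h κ),
      ρ h (p * q) = ∑ i ∈ r.index, ρ (r.left i) p * ρ (r.right i) q)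
    (T : HH →ₗ[k] HH) (Tm : ∀ x y, T (x * y) = T y * T x)
    (TA : ∀ p, T (A p) = B p) (TB : ∀ p, T (B p) = A p)
    (Tι : ∀ h, T (ι h) = ι (twistedAntipode δ h)) :
    (bigD R e Φ).IsParaHopf T where
  bialgebroid := bigD_bialg R e he ΦA ΦB Φι
  T_one := by rw [← R.a_one, TA, R.b_one, R.a_one]
  T_antimul := Tm
  PH1 := TB
  T_invol x := by
    induction x using hh_ind e he with
    | h0 => simp
    | hadd x y hx hy => rw [map_add, map_add, hx, hy]
    | hm p q h => simp only [Tm, TA, TB, Tι, hS2, mul_assoc]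
  PH2 x := by
    change PreBialgebroid.mulL T (Φ x) = B ((bigD R e Φ).ε (T x))
    induction x using hh_ind e he with
    | h0 => simp
    | hadd x y hx hy => simp only [map_add, hx, hy]
    | hm p q h =>
      have hb := bigD_bialg R e he ΦA ΦB Φι
      have el : ∀ r x, (bigD R e Φ).ε (A r * x) = r * (bigD R e Φ).ε x := hb.ε_left
      have er : ∀ r x, (bigD R e Φ).ε (B r * x) = (bigD R e Φ).ε x * r := hb.ε_right
      have eι : ∀ h, (bigD R e Φ).ε (ι h) = counit (R := k) h • 1 := by
        intro g
        have := bigD_eps R e he Φ 1 1 g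
        simpa [R.a_one, R.b_one] using this
      have e1 : ∀ g, (bigD R e Φ).ε (ι g * B p) = ρ g p := by
        intro g
        rw [R.cb _ _ (ℛ k g), map_sum]
        simp only [er, eι, smul_mul_assoc, one_mul]
        exact sum_cl (ρ.flip p) (ℛ k g)
      have e2 : ∀ g, (bigD R e Φ).ε (ι g * (A q * B p)) = ρ g (q * p) := by
        intro g
        rw [← mul_assoc, R.ca _ _ (ℛ k g), hρalgmul _ _ _ (ℛ k g), Finset.sum_mul, map_sum]
        simp only [mul_assoc, el, e1]
      simp only [Tm, TA, TB, Tι, mul_assoc, e2]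
      rw [delta_repr ΦA ΦB Φι p q (ℛ k h), map_sum,
        ← sum_beta R (twistedAntipode δ) (fun r => (reprT δ r).eq.symm) (q * p) (ℛ k h)]
      refine Finset.sum_congr rfl fun i _ => ?_
      simp only [mulL_tmul, Tm, TA, Tι, R.b_mul, mul_assoc]
  PH3 x := by
    change (bigD R e Φ).π2 ((bigD R e Φ).tau2 T (Φ x)) = _
    induction x using hh_ind e he with
    | h0 => simp
    | hadd x y hx hy => simp only [map_add, TensorProduct.tmul_add, hx, hy]
    | hm p q h =>
      rw [delta_repr ΦA ΦB Φι p q (ℛ k h)]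
      have hh := sw_assoc (fun x y z : 𝓗 =>
        (bigD R e Φ).π2 ((ι (antipode k y) * (B q * ι z)) ⊗ₜ[k] (ι (twistedAntipode δ x) * B p)))
        (ℛ k h) (fun i => ℛ k _) (fun i => ℛ k _)
      simp only [map_sum]
      refine Eq.trans ?_ (hh.trans ?_)
      · refine Finset.sum_congr rfl fun i _ => ?_
        rw [tau2_tmul, Tm, TA, Tι]
        change (bigD R e Φ).π2 (Φ _ * _) = _
        rw [map_mul Φ, ΦB, Φι, ← (reprT δ (ℛ k ((ℛ k h).left i))).eq]
        simp [reprT, Finset.sum_mul]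
      · simp only [Tm, TA, TB, Tι, mul_assoc]
        rw [← mul_assoc, R.ca _ _ (reprT δ (ℛ k h)), Finset.sum_mul, TensorProduct.tmul_sum,
          map_sum]
        refine Finset.sum_congr rfl fun i _ => ?_
        rw [← map_sum, ← TensorProduct.sum_tmul,
          sum_beta R (antipode k) (fun r => (reprS r).eq.symm) q (ℛ k ((ℛ k h).right i)),
          mul_assoc]
        have := pi2_rel (bigD R e Φ) (ρ (antipode k ((ℛ k h).right i)) q) 1
          (ι (twistedAntipode δ ((ℛ k h).left i)) * B p)
        rw [mul_one] at this
        exact this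

end Core

open Coalgebra MulOpposite in
/-- the double crossed product `H = 𝒫 ⋊ 𝓗 ⋉ 𝒫ᵒᵖ` of a Hopf algebra `𝓗`
(with character `δ` whose twisted antipode is involutive) acting on a module algebra `𝒫`
is a para-Hopf algebroid over `𝒫`, with the Connes–Moscovici structure maps. -/
theorem doubleCrossedProduct_is_paraHopf
    {k 𝓗 PAlg HH : Type} [Field k] [Ring 𝓗] [HopfAlgebra k 𝓗]
    [Ring PAlg] [Algebra k PAlg] [Ring HH] [Algebra k HH]
    (δ : 𝓗 →ₐ[k] k)
    (hS2 : ∀ h : 𝓗, twistedAntipode δ (twistedAntipode δ h) = h)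
    -- `ρ` is a left action of `𝓗` on `𝒫` making `𝒫` an `𝓗`-module algebra:
    (ρ : 𝓗 →ₗ[k] PAlg →ₗ[k] PAlg)
    (hρ1 : ∀ p : PAlg, ρ 1 p = p)
    (hρmul : ∀ (g h : 𝓗) (p : PAlg), ρ (g * h) p = ρ g (ρ h p))
    (hρalg1 : ∀ h : 𝓗, ρ h (1 : PAlg) = counit (R := k) h • (1 : PAlg))
    (hρalgmul : ∀ (h : 𝓗) (p q : PAlg),
      ρ h (p * q) =
        (TensorProduct.lift (LinearMap.mk₂ k (fun x y => ρ x p * ρ y q)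
          (by intros; simp [map_add, add_mul])
          (by intros; simp [map_smul, smul_mul_assoc])
          (by intros; simp [map_add, mul_add])
          (by intros; simp [map_smul, mul_smul_comm]))) (comul h))
    -- `HH` is the double crossed product algebra, identified with `𝒫 ⊗ 𝓗 ⊗ 𝒫`
    -- via `e`, with the double crossed product multiplication and unit:
    (e : (PAlg ⊗[k] (𝓗 ⊗[k] PAlg)) ≃ₗ[k] HH)
    (he1 : e ((1 : PAlg) ⊗ₜ[k] ((1 : 𝓗) ⊗ₜ[k] (1 : PAlg))) = 1)
    (hemul : ∀ (P₁ P₂ Q₁ Q₂ : PAlg) (h₁ h₂ : 𝓗),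
      e (P₁ ⊗ₜ[k] (h₁ ⊗ₜ[k] Q₁)) * e (P₂ ⊗ₜ[k] (h₂ ⊗ₜ[k] Q₂)) =
        e (dcpMul ρ P₁ P₂ Q₁ Q₂ h₂ (comul2 h₁))) :
    ∃ (D : PreBialgebroid k HH PAlg) (T : HH →ₗ[k] HH),
      D.IsParaHopf T ∧
      (∀ P : PAlg, D.α P = e (P ⊗ₜ[k] ((1 : 𝓗) ⊗ₜ[k] (1 : PAlg)))) ∧
      (∀ Q : PAlg, D.β Q = e ((1 : PAlg) ⊗ₜ[k] ((1 : 𝓗) ⊗ₜ[k] Q))) ∧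
      (∀ (P Q : PAlg) (h : 𝓗),
        D.π2 (D.Δ (e (P ⊗ₜ[k] (h ⊗ₜ[k] Q)))) = D.π2 (dcpΔ e P Q (comul h))) ∧
      (∀ (P Q : PAlg) (h : 𝓗),
        D.ε (e (P ⊗ₜ[k] (h ⊗ₜ[k] Q))) = counit (R := k) h • (P * Q)) ∧
      (∀ (P Q : PAlg) (h : 𝓗),
        T (e (P ⊗ₜ[k] (h ⊗ₜ[k] Q))) = e (dcpT ρ δ P Q (comul2 h))) := by
  have R := base_rel ρ hρ1 hρalg1 e he1 hemul
  have he := base_he ρ hρ1 e hemul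
  obtain ⟨Φ, ΦA, ΦB, Φι⟩ := phi_hom e he R (drel_delta R)
  obtain ⟨Ψ, ΨA, ΨB, Ψι⟩ := phi_hom e he R (drel_T δ R hρ1 hρmul hS2)
  let T : HH →ₗ[k] HH := (MulOpposite.opLinearEquiv k).symm.toLinearMap ∘ₗ Ψ.toLinearMap
  have Tm : ∀ x y, T (x * y) = T y * T x := by intro x y; simp [T]
  have TA : ∀ p, T (bA e p) = bB e p := by intro p; simp [T, ΨA]
  have TB : ∀ p, T (bB e p) = bA e p := by intro p; simp [T, ΨB]
  have Tι : ∀ h, T (bI e h) = bI e (twistedAntipode δ h) := by intro p; simp [T, Ψι]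
  refine ⟨bigD R e Φ, T, bigD_paraHopf R e he ΦA ΦB Φι δ hS2 ?_ T Tm TA TB Tι,
    fun _ => rfl, fun _ => rfl, ?_, ?_, ?_⟩
  · intro h p q κ r
    rw [hρalgmul, ← r.eq]
    simp
  · intro P Q h
    congr 1
    change Φ (e _) = _
    rw [he, delta_repr ΦA ΦB Φι P Q (ℛ k h), ← (ℛ k h).eq]
    have h1 : ∀ x y, bB e x * bI e y = e (1 ⊗ₜ[k] (y ⊗ₜ[k] x)) := by
      intro x y
      rw [he, show bA e 1 = 1 from he1, one_mul]
    have h2 : ∀ x y, bA e x * bI e y = e (x ⊗ₜ[k] (y ⊗ₜ[k] 1)) := by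
      intro x y
      rw [he, show bB e 1 = 1 from he1, one_mul]
    simp [dcpΔ, h1, h2]
  · intro P Q h
    rw [he]
    exact bigD_eps R e he Φ P Q h
  · intro P Q h
    rw [comul2_repr (ℛ k h) (fun i => ℛ k _)]
    have hc : ∀ (i j l : 𝓗), e (dcpT ρ δ P Q (i ⊗ₜ[k] (j ⊗ₜ[k] l))) =
        bA e (ρ (HopfAlgebra.antipode k l) Q) * (bB e (ρ (twistedAntipode δ i) P) *
          bI e (HopfAlgebra.antipode k j)) := by
      intro i j l
      rw [← he]
      simp [dcpT, cyc3]
    simp only [map_sum, hc]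
    rw [he, Tm, Tm, TA, TB, Tι, mul_assoc, R.ab, ← mul_assoc, R.cb _ _ (reprT δ (ℛ k h)),
      Finset.sum_mul]
    refine Finset.sum_congr rfl fun i _ => ?_
    change bB e (ρ (twistedAntipode δ ((ℛ k h).left i)) P) *
      bI e (HopfAlgebra.antipode k ((ℛ k h).right i)) * bA e Q = _
    rw [mul_assoc, R.ca _ _ (reprS (ℛ k ((ℛ k h).right i))), Finset.mul_sum]
    refine Finset.sum_congr rfl fun j _ => ?_
    rw [← mul_assoc, ← R.ab, mul_assoc]
    rfl
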